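/- Let G be an n-vertex unicyclic graph whose unique cycle has length l, and let x ∈ V(G). Then RC(x) ≥ l³/6 − 7l/6 + n, with equality if and only if G is S_n^l and x is the vertex of degree n−l+2. -/

import Mathlib

open SimpleGraph Finset

attribute [local instance] Classical.propDecidable

variable {V : Type*}

/-- Degree of a vertex as a real number. -/
noncomputable def degR [Fintype V] (G : SimpleGraph V) (x : V) : ℝ :=
  ((Finset.univ.filter fun y => G.Adj x y).card : ℝ)

/-- Number of edges of a graph. -/
noncomputable def esize (G : SimpleGraph V) : ℕ := Nat.card G.edgeSet

/-- Dirichlet energy of a potential. -/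
noncomputable def energyFn [Fintype V] (G : SimpleGraph V) (φ : V → ℝ) : ℝ :=
  (1/2) * ∑ u, ∑ v, if G.Adj u v then (φ u - φ v)^2 else 0

/-- Effective resistance between two vertices (unit resistors on edges),
via the Dirichlet variational principle: the reciprocal of the minimal energy
of a potential with value 1 at `x` and 0 at `y`. -/
noncomputable def eres [Fintype V] (G : SimpleGraph V) (x y : V) : ℝ :=
  (sInf {e : ℝ | ∃ φ : V → ℝ, φ x = 1 ∧ φ y = 0 ∧ e = energyFn G φ})⁻¹

/-- The transition matrix of the simple random walk, killed at `y`. -/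
noncomputable def hitMat [Fintype V] (G : SimpleGraph V) (y : V) : Matrix V V ℝ :=
  Matrix.of fun u v => if v = y then 0 else if G.Adj u v then (degR G u)⁻¹ else 0

/-- Expected hitting time `H_{xy}` of the simple random walk from `x` to `y`,
expressed as the sum of the survival probabilities of the walk killed at `y`. -/
noncomputable def hitting [Fintype V] (G : SimpleGraph V) (x y : V) : ℝ :=
  if x = y then 0 else ∑' k : ℕ, ∑ z, (hitMat G y ^ k) x z

/-- Resistance-centrality `R(x)`. -/
noncomputable def Rres [Fintype V] (G : SimpleGraph V) (x : V) : ℝ := ∑ y, eres G x y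

/-- Weighted resistance-centrality `R^w(x)`. -/
noncomputable def Rw [Fintype V] (G : SimpleGraph V) (x : V) : ℝ :=
  ∑ y, degR G y * eres G x y

/-- Kirchhoff index `Kf(G)`. -/
noncomputable def Kf [Fintype V] (G : SimpleGraph V) : ℝ :=
  (1/2) * ∑ x, ∑ y, eres G x y

/-- Additive degree-Kirchhoff index `Kf⁺(G)`. -/
noncomputable def KfPlus [Fintype V] (G : SimpleGraph V) : ℝ :=
  (1/2) * ∑ x, ∑ y, (degR G x + degR G y) * eres G x y

/-- Multiplicative degree-Kirchhoff index `Kf*(G)`. -/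
noncomputable def KfStar [Fintype V] (G : SimpleGraph V) : ℝ :=
  (1/2) * ∑ x, ∑ y, degR G x * degR G y * eres G x y

/-- Cover cost `CC(x) = Σ_y H_{xy}`. -/
noncomputable def coverCost [Fintype V] (G : SimpleGraph V) (x : V) : ℝ :=
  ∑ y, hitting G x y

/-- Reverse cover cost `RC(x) = Σ_y H_{yx}`. -/
noncomputable def reverseCoverCost [Fintype V] (G : SimpleGraph V) (x : V) : ℝ :=
  ∑ y, hitting G y x

/-- Centrality (transmission) `D(x) = Σ_y d(x,y)`. -/
noncomputable def Dcent [Fintype V] (G : SimpleGraph V) (x : V) : ℝ :=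
  ∑ y, (G.dist x y : ℝ)

/-- Weighted centrality `D^w(x) = Σ_y deg(y)·d(x,y)`. -/
noncomputable def Dw [Fintype V] (G : SimpleGraph V) (x : V) : ℝ :=
  ∑ y, degR G y * (G.dist x y : ℝ)

/-- Wiener index `W(G)`. -/
noncomputable def Wiener [Fintype V] (G : SimpleGraph V) : ℝ :=
  (1/2) * ∑ x, ∑ y, (G.dist x y : ℝ)

/-- `D_{T}(v)`: sum of distances from `v` to the vertices of its connected
component in `G'` (used for the branch trees of a unicyclic graph). -/
noncomputable def branchD [Fintype V] (G' : SimpleGraph V) (v : V) : ℝ :=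
  ∑ u, if G'.Reachable v u then (G'.dist v u : ℝ) else 0

/-- The set of edges of the cycle `c 0 - c 1 - ⋯ - c (l-1) - c 0`. -/
def cycleEdges {l : ℕ} [NeZero l] (c : Fin l → V) : Set (Sym2 V) :=
  Set.range fun i : Fin l => s(c i, c (i + 1))

/-- Distance from a vertex to a set of vertices. -/
noncomputable def distToSet [Fintype V] (G : SimpleGraph V) (x : V) (s : Set V) : ℕ :=
  sInf {d | ∃ y ∈ s, G.dist x y = d}

/-- `v` is the center of a star. -/
def IsStarCenter (G : SimpleGraph V) (v : V) : Prop := ∀ u, u ≠ v → G.Adj v u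

/-- `G` is a star. -/
def IsStar (G : SimpleGraph V) : Prop := ∃ v, IsStarCenter G v

/-- The lollipop graph `P_n^l` : a cycle `C_l` on `0,…,l-1` together with a
path on `l,…,n-1` attached at the cycle vertex `0`. -/
def lollipop (n l : ℕ) : SimpleGraph (Fin n) :=
  SimpleGraph.fromRel (fun a b =>
    (a.val + 1 = b.val ∧ b.val < l) ∨ (a.val = 0 ∧ b.val = l - 1) ∨
    (a.val = 0 ∧ b.val = l) ∨ (l ≤ a.val ∧ a.val + 1 = b.val))

/-- The graph `S_n^l` : a cycle `C_l` on `0,…,l-1` with `n - l` pendant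
vertices `l,…,n-1` attached at the cycle vertex `0`. -/
def starCycle (n l : ℕ) : SimpleGraph (Fin n) :=
  SimpleGraph.fromRel (fun a b =>
    (a.val + 1 = b.val ∧ b.val < l) ∨ (a.val = 0 ∧ b.val = l - 1) ∨
    (a.val = 0 ∧ l ≤ b.val))

/-- The cycle graph `C_n` on `Fin n`. -/
def cycleG (n : ℕ) : SimpleGraph (Fin n) :=
  SimpleGraph.fromRel (fun a b => a.val + 1 = b.val ∨ (a.val = 0 ∧ b.val = n - 1))

/-!
As a function of the starting vertex, the hitting time of `x` is the solution of `L h = deg` off `x`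
with `h x = 0`, where `L` is the Laplacian. By the maximum principle every subsolution lies below
it. Moving the foot of `x` to position `0`, the hitting time `k * (l - k)` of `0` on the cycle,
pulled back along the retraction that sends every vertex to the foot of its branch, is a
subsolution, and the hitting time is at least `1` at every vertex other than `x`. Using the first
bound at one vertex for each position (`x` itself for position `0`) and the second at the remaining
`n - l` vertices, and summing, gives the bound.

Equality forces hitting time `1` at these remaining vertices, which are therefore pendant at `x`.
The vertices of the cycle are not pendant, so `x` lies on the cycle.
-/

section HittingTimes

open scoped Matrix

variable [Fintype V] {G : SimpleGraph V} {x y : V}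

theorem lapMatrix_mulVec_eq_sum_sub (f : V → ℝ) (y : V) :
    (G.lapMatrix ℝ *ᵥ f) y = ∑ z ∈ G.neighborFinset y, (f y - f z) := by
  rw [lapMatrix_mulVec_apply, sum_sub_distrib, sum_const, card_neighborFinset_eq_degree,
    nsmul_eq_mul]

theorem le_of_lapMatrix_mulVec_nonpos (hG : G.Preconnected) {u : V → ℝ}
    (hu : ∀ y ≠ x, (G.lapMatrix ℝ *ᵥ u) y ≤ 0) (y : V) : u y ≤ u x := by
  obtain ⟨m, -, hm⟩ := exists_max_image univ u ⟨x, mem_univ x⟩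
  -- The maximum spreads along a walk to `x`.
  suffices hspread : ∀ v, Relation.ReflTransGen G.Adj v x → u v = u m → u x = u m from
    hspread m ((reachable_iff_reflTransGen m x).1 (hG m x)) rfl ▸ hm y (mem_univ y)
  intro v hv
  induction hv using Relation.ReflTransGen.head_induction_on with
  | refl => exact id
  | @head a b hab _ ih =>
    intro ham
    obtain rfl | hax := eq_or_ne a x
    · exact ham
    have hnonneg : ∀ z ∈ G.neighborFinset a, 0 ≤ u a - u z := fun z _ ↦
      sub_nonneg.2 (ham ▸ hm z (mem_univ z))
    have hsum : ∑ z ∈ G.neighborFinset a, (u a - u z) = 0 :=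
      le_antisymm (lapMatrix_mulVec_eq_sum_sub u a ▸ hu a hax) (sum_nonneg hnonneg)
    have hba := (sum_eq_zero_iff_of_nonneg hnonneg).1 hsum b ((G.mem_neighborFinset a b).2 hab)
    exact ih ((sub_eq_zero.1 hba).symm.trans ham)

theorem le_of_lapMatrix_mulVec_le (hG : G.Preconnected) {f g : V → ℝ} (hx : f x ≤ g x)
    (hfg : ∀ y ≠ x, (G.lapMatrix ℝ *ᵥ f) y ≤ (G.lapMatrix ℝ *ᵥ g) y) (y : V) : f y ≤ g y := by
  have hsub := le_of_lapMatrix_mulVec_nonpos (u := f - g) hG (x := x) (fun z hz ↦ by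
    simpa [Matrix.mulVec_sub] using hfg z hz) y
  simp only [Pi.sub_apply] at hsub
  linarith

theorem eq_of_lapMatrix_mulVec_eq (hG : G.Preconnected) {f g : V → ℝ} (hx : f x = g x)
    (hfg : ∀ y ≠ x, (G.lapMatrix ℝ *ᵥ f) y = (G.lapMatrix ℝ *ᵥ g) y) : f = g :=
  funext fun y ↦ le_antisymm
    (le_of_lapMatrix_mulVec_le hG hx.le (fun z hz ↦ (hfg z hz).le) y)
    (le_of_lapMatrix_mulVec_le hG hx.ge (fun z hz ↦ (hfg z hz).ge) y)

theorem exists_lapMatrix_mulVec_eq (hG : G.Preconnected) (x : V) (b : V → ℝ) :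
    ∃ f : V → ℝ, f x = b x ∧ ∀ y ≠ x, (G.lapMatrix ℝ *ᵥ f) y = b y := by
  let A : (V → ℝ) →ₗ[ℝ] V → ℝ := ((G.lapMatrix ℝ).updateRow x (Pi.single x 1)).mulVecLin
  have hAx (f : V → ℝ) : A f x = f x := by simp [A, Matrix.mulVec]
  have hAy (f : V → ℝ) {y : V} (hy : y ≠ x) : A f y = (G.lapMatrix ℝ *ᵥ f) y := by
    simp [A, Matrix.mulVec, hy]
  -- In finite dimension, uniqueness gives existence.
  have hA : Function.Injective A := fun f g hfg ↦
    eq_of_lapMatrix_mulVec_eq hG (by rw [← hAx f, hfg, hAx g])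
      fun y hy ↦ by rw [← hAy f hy, hfg, hAy g hy]
  obtain ⟨f, hf⟩ := LinearMap.injective_iff_surjective.1 hA b
  exact ⟨f, by rw [← hAx f, hf], fun y hy ↦ by rw [← hAy f hy, hf]⟩

/-- The probability that the simple random walk from `y` has not visited `x` by time `k`. The case
`y = x` is separate because `hitMat G x` only kills the walk when it steps onto `x`. -/
noncomputable def survival (G : SimpleGraph V) (x : V) (k : ℕ) (y : V) : ℝ :=
  if y = x then 0 else (hitMat G x ^ k *ᵥ 1) y

theorem hitting_eq_tsum_survival (G : SimpleGraph V) (y x : V) :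
    hitting G y x = ∑' k, survival G x k y := by
  by_cases hy : y = x <;> simp [hitting, survival, hy, Matrix.mulVec, dotProduct]

theorem survival_self (k : ℕ) : survival G x k x = 0 :=
  if_pos rfl

theorem survival_zero (hy : y ≠ x) : survival G x 0 y = 1 := by
  simp [survival, hy]

theorem degR_eq_degree (G : SimpleGraph V) (y : V) : degR G y = G.degree y := by
  rw [degR, ← card_neighborFinset_eq_degree, neighborFinset_eq_filter]

theorem survival_succ (hy : y ≠ x) (k : ℕ) :
    survival G x (k + 1) y = (G.degree y : ℝ)⁻¹ * ∑ z ∈ G.neighborFinset y, survival G x k z := by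
  rw [survival, if_neg hy, pow_succ', ← Matrix.mulVec_mulVec, Matrix.mulVec, dotProduct,
    neighborFinset_eq_filter, sum_filter, mul_sum]
  refine sum_congr rfl fun z _ ↦ ?_
  simp only [hitMat, Matrix.of_apply, survival, degR_eq_degree]
  split_ifs <;> simp

theorem survival_nonneg (k : ℕ) (y : V) : 0 ≤ survival G x k y := by
  induction k generalizing y with
  | zero => simp only [survival, pow_zero, Matrix.one_mulVec]; split_ifs <;> simp
  | succ k ih =>
    obtain rfl | hy := eq_or_ne y x
    · rw [survival_self]
    · rw [survival_succ hy]
      exact mul_nonneg (by positivity) (sum_nonneg fun z _ ↦ ih z)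

theorem degree_cast_pos_of_ne (hG : G.Preconnected) (hy : y ≠ x) : (0 : ℝ) < G.degree y :=
  have : Nontrivial V := ⟨y, x, hy⟩
  Nat.cast_pos.2 (hG.degree_pos_of_nontrivial y)

theorem sum_range_survival_le (hG : G.Preconnected) {f : V → ℝ} (hx : 0 ≤ f x)
    (hf : ∀ y ≠ x, G.degree y ≤ (G.lapMatrix ℝ *ᵥ f) y) (K : ℕ) (y : V) :
    ∑ k ∈ range K, survival G x k y ≤ f y := by
  have hnonneg (y : V) : 0 ≤ f y :=
    le_of_lapMatrix_mulVec_le (f := 0) hG hx (fun z hz ↦ by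
      simpa using (Nat.cast_nonneg _).trans (hf z hz)) y
  induction K generalizing y with
  | zero => simpa using hnonneg y
  | succ K ih =>
    obtain rfl | hy := eq_or_ne y x
    · simpa [survival_self] using hnonneg y
    have hdeg := degree_cast_pos_of_ne hG hy
    have hfy := hf y hy
    rw [lapMatrix_mulVec_apply] at hfy
    calc ∑ k ∈ range (K + 1), survival G x k y
        = (G.degree y : ℝ)⁻¹ * ∑ z ∈ G.neighborFinset y, ∑ k ∈ range K, survival G x k z + 1 := by
          rw [sum_range_succ', survival_zero hy, sum_comm, mul_sum]
          simp only [survival_succ hy]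
      _ ≤ (G.degree y : ℝ)⁻¹ * ∑ z ∈ G.neighborFinset y, f z + 1 := by
          gcongr with z
          exact ih z
      _ ≤ (G.degree y : ℝ)⁻¹ * (G.degree y * f y - G.degree y) + 1 := by
          gcongr
          linarith
      _ = f y := by
          field_simp
          ring

theorem summable_survival (hG : G.Preconnected) (x y : V) :
    Summable fun k ↦ survival G x k y := by
  obtain ⟨f, hfx, hf⟩ := exists_lapMatrix_mulVec_eq hG x (Function.update (G.degree ·) x 0)
  refine summable_of_sum_range_le (fun k ↦ survival_nonneg k y) fun K ↦
    sum_range_survival_le (f := f) hG (by simp [hfx]) (fun z hz ↦ ?_) K y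
  rw [hf z hz, Function.update_of_ne hz]

theorem hitting_eq_one_add (hG : G.Preconnected) (hy : y ≠ x) :
    hitting G y x = 1 + (G.degree y : ℝ)⁻¹ * ∑ z ∈ G.neighborFinset y, hitting G z x := by
  simp only [hitting_eq_tsum_survival]
  rw [(summable_survival hG x y).tsum_eq_zero_add, survival_zero hy,
    ← Summable.tsum_finsetSum fun z _ ↦ summable_survival hG x z, ← tsum_mul_left]
  simp only [survival_succ hy]

theorem hitting_self (G : SimpleGraph V) (x : V) : hitting G x x = 0 :=
  if_pos rfl

theorem lapMatrix_mulVec_hitting (hG : G.Preconnected) (hy : y ≠ x) :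
    (G.lapMatrix ℝ *ᵥ (hitting G · x)) y = G.degree y := by
  have hdeg := degree_cast_pos_of_ne hG hy
  rw [lapMatrix_mulVec_apply, hitting_eq_one_add hG hy]
  field_simp
  ring

theorem le_hitting (hG : G.Preconnected) {f : V → ℝ} (hx : f x ≤ 0)
    (hf : ∀ y ≠ x, (G.lapMatrix ℝ *ᵥ f) y ≤ G.degree y) (y : V) : f y ≤ hitting G y x :=
  le_of_lapMatrix_mulVec_le (g := (hitting G · x)) hG (hx.trans_eq (hitting_self G x).symm)
    (fun z hz ↦ (hf z hz).trans_eq (lapMatrix_mulVec_hitting hG hz).symm) y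

theorem hitting_eq (hG : G.Preconnected) {f : V → ℝ} (hx : f x = 0)
    (hf : ∀ y ≠ x, (G.lapMatrix ℝ *ᵥ f) y = G.degree y) : (hitting G · x) = f :=
  eq_of_lapMatrix_mulVec_eq hG ((hitting_self G x).trans hx.symm)
    fun z hz ↦ (lapMatrix_mulVec_hitting hG hz).trans (hf z hz).symm

theorem hitting_nonneg (hG : G.Preconnected) (y x : V) : 0 ≤ hitting G y x :=
  le_hitting (f := 0) hG le_rfl (fun z _ ↦ by simp) y

theorem one_le_hitting (hG : G.Preconnected) (hy : y ≠ x) : 1 ≤ hitting G y x := by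
  rw [hitting_eq_one_add hG hy]
  exact le_add_of_nonneg_right
    (mul_nonneg (by positivity) (sum_nonneg fun z _ ↦ hitting_nonneg hG z x))

theorem eq_of_adj_of_hitting_eq_one (hG : G.Preconnected) (hy : y ≠ x) (h : hitting G y x = 1)
    {z : V} (hz : G.Adj y z) : z = x := by
  have hsum : ∑ w ∈ G.neighborFinset y, hitting G w x = 0 := by
    simpa [h, (degree_cast_pos_of_ne hG hy).ne'] using (hitting_eq_one_add hG hy).symm
  by_contra hzx
  have hz0 := (sum_eq_zero_iff_of_nonneg fun w _ ↦ hitting_nonneg hG w x).1 hsum z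
    ((G.mem_neighborFinset y z).2 hz)
  linarith [one_le_hitting hG hzx]

end HittingTimes

section CycleHitting

/-- The expected time for the simple random walk on the cycle `C_l` to travel from `k` to `0`. -/
noncomputable def cycleHitting (l : ℕ) (k : Fin l) : ℝ :=
  k * (l - k)

variable {l : ℕ}

theorem cycleHitting_nonneg (k : Fin l) : 0 ≤ cycleHitting l k :=
  mul_nonneg (Nat.cast_nonneg _) (sub_nonneg.2 (Nat.cast_le.2 k.is_le'))

theorem sum_cycleHitting (l : ℕ) : ∑ k, cycleHitting l k = (l ^ 3 - l) / 6 := by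
  have hsum (m : ℕ) (a : ℝ) :
      ∑ k ∈ range m, (k : ℝ) * (a - k) =
        a * (m * (m - 1) / 2) - (m - 1) * m * (2 * m - 1) / 6 := by
    induction m with
    | zero => simp
    | succ m ih => rw [sum_range_succ, ih]; push_cast; ring
  simp only [cycleHitting]
  rw [Fin.sum_univ_eq_sum_range (fun k ↦ (k : ℝ) * (l - k)) l, hsum]
  ring

variable [NeZero l]

@[simp]
theorem cycleHitting_zero : cycleHitting l 0 = 0 := by
  simp [cycleHitting]

theorem fin_val_add_one_eq_ite (k : Fin l) :
    ((k + 1 : Fin l) : ℕ) = if (k : ℕ) + 1 = l then 0 else (k : ℕ) + 1 := by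
  split_ifs with h
  · simp [Fin.val_add, h]
  · exact Fin.val_add_one_of_lt' (lt_of_le_of_ne k.is_lt h)

theorem fin_add_one_ne_sub_one (hl : 3 ≤ l) (k : Fin l) : k + 1 ≠ k - 1 := by
  intro h
  have hval := congrArg Fin.val (eq_sub_iff_add_eq.1 h)
  simp only [fin_val_add_one_eq_ite] at hval
  split_ifs at hval <;> omega

-- Both sides vanish when `k + 1` wraps around to `0`.
theorem cycleHitting_add_one (k : Fin l) : cycleHitting l (k + 1) = (k + 1) * (l - (k + 1)) := by
  rw [cycleHitting, fin_val_add_one_eq_ite]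
  split_ifs with h
  · have hl : (l : ℝ) = k + 1 := by exact_mod_cast h.symm
    simp [hl]
  · push_cast
    ring

theorem two_mul_cycleHitting_sub {k : Fin l} (hk : k ≠ 0) :
    2 * cycleHitting l k - cycleHitting l (k + 1) - cycleHitting l (k - 1) = 2 := by
  have hsub : cycleHitting l (k - 1) = (k - 1) * (l - (k - 1)) := by
    have hk1 : 1 ≤ (k : ℕ) := Nat.one_le_iff_ne_zero.2 (Fin.val_ne_zero_iff.2 hk)
    rw [cycleHitting, Fin.val_sub_one_of_ne_zero hk, Nat.cast_sub hk1, Nat.cast_one]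
  rw [cycleHitting_add_one, hsub, cycleHitting]
  ring

end CycleHitting

section Extend

theorem exists_equiv_apply_eq {ι W : Type*} [Nonempty ι] [Fintype V] [Fintype W] {s : ι → V}
    {t : ι → W} (hs : Function.Injective s) (ht : Function.Injective t)
    (hcard : Fintype.card V = Fintype.card W) : ∃ e : V ≃ W, ∀ i, e (s i) = t i := by
  have hinv := Function.leftInverse_invFun hs
  have hinj : Set.InjOn (t ∘ Function.invFun s) (Set.range s) := by
    rintro _ ⟨i, rfl⟩ _ ⟨j, rfl⟩ hij
    rw [Function.comp_apply, Function.comp_apply, hinv, hinv] at hij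
    rw [ht hij]
  obtain ⟨e, he⟩ := Set.MapsTo.exists_equiv_extend_of_card_eq (t := univ) hcard
    (fun _ _ ↦ mem_coe.2 (mem_univ _)) hinj
  refine ⟨e.trans (Equiv.subtypeUnivEquiv mem_univ), fun i ↦ ?_⟩
  simpa [hinv i] using he (s i) ⟨i, rfl⟩

theorem sum_extend_one {ι : Type*} [Fintype ι] [Fintype V] {s : ι → V}
    (hs : Function.Injective s) (f : ι → ℝ) :
    ∑ v, Function.extend s f 1 v = ∑ i, f i + (Fintype.card V - Fintype.card ι) := by
  have hoff : ∑ v ∈ (univ.image s)ᶜ, Function.extend s f 1 v = #(univ.image s)ᶜ := by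
    rw [card_eq_sum_ones, Nat.cast_sum]
    refine sum_congr rfl fun v hv ↦ ?_
    rw [Function.extend_apply' _ _ _ (by simpa using hv)]
    simp
  rw [← sum_add_sum_compl (univ.image s), sum_image hs.injOn, hoff, card_compl,
    card_image_of_injective _ hs, card_univ, Nat.cast_sub (Fintype.card_le_of_injective s hs)]
  simp only [hs.extend_apply]

theorem sum_extend_cycleHitting {l : ℕ} [Fintype V] {s : Fin l → V} (hs : Function.Injective s) :
    ∑ v, Function.extend s (cycleHitting l) 1 v = l ^ 3 / 6 - 7 * l / 6 + Fintype.card V := by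
  rw [sum_extend_one hs, sum_cycleHitting, Fintype.card_fin]
  ring

theorem leftInverse_update {ι : Type*} [DecidableEq ι] {c : ι → V} {r : V → ι}
    (hc : Function.LeftInverse r c) (x : V) :
    Function.LeftInverse r (Function.update c (r x) x) := fun i ↦ by
  obtain rfl | hi := eq_or_ne i (r x)
  · rw [Function.update_self]
  · rw [Function.update_of_ne hi, hc]

end Extend

section CycleRetraction

open scoped Matrix

variable {l : ℕ} [NeZero l] {G : SimpleGraph V} {c : Fin l → V} {r : V → Fin l}

theorem mk_mem_cycleEdges_iff {u v : V} :
    s(u, v) ∈ cycleEdges c ↔ ∃ i, u = c i ∧ (v = c (i + 1) ∨ v = c (i - 1)) := by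
  constructor
  · rintro ⟨i, hi⟩
    obtain ⟨rfl, rfl⟩ | ⟨rfl, rfl⟩ := Sym2.eq_iff.1 hi
    · exact ⟨i, rfl, .inl rfl⟩
    · exact ⟨i + 1, rfl, .inr (by rw [add_sub_cancel_right])⟩
  · rintro ⟨i, rfl, rfl | rfl⟩
    · exact ⟨i, rfl⟩
    · exact ⟨i - 1, by simp only [sub_add_cancel, Sym2.eq_swap]⟩

/-- `G` is the cycle `c` with further graphs hanging at its vertices: `r` sends each vertex to the
index of the cycle vertex at which it hangs, so that only the edges of the cycle join vertices with
different images. -/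
structure IsCycleRetraction (G : SimpleGraph V) (c : Fin l → V) (r : V → Fin l) : Prop where
  adj_add_one (i : Fin l) : G.Adj (c i) (c (i + 1))
  leftInverse : Function.LeftInverse r c
  eq_of_adj {u v : V} (huv : G.Adj u v) (he : s(u, v) ∉ cycleEdges c) : r u = r v

namespace IsCycleRetraction

theorem rotate (h : IsCycleRetraction G c r) (i : Fin l) :
    IsCycleRetraction G (fun j ↦ c (j + i)) (fun v ↦ r v - i) where
  adj_add_one j := by rw [add_right_comm]; exact h.adj_add_one (j + i)
  leftInverse j := by simp only [h.leftInverse _, add_sub_cancel_right]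
  eq_of_adj {u v} huv he := by
    refine congrArg (· - i) (h.eq_of_adj huv fun ⟨j, hj⟩ ↦ he ⟨j - i, ?_⟩)
    simpa only [sub_add_cancel, add_right_comm] using hj

theorem adj_sub_one (h : IsCycleRetraction G c r) (i : Fin l) : G.Adj (c i) (c (i - 1)) := by
  simpa using (h.adj_add_one (i - 1)).symm

theorem adj_iff (h : IsCycleRetraction G c r) (i j : Fin l) :
    G.Adj (c i) (c j) ↔ j = i + 1 ∨ i = j + 1 := by
  refine ⟨fun hij ↦ ?_, ?_⟩
  · by_contra hne
    refine hij.ne (congrArg c ?_)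
    rw [← h.leftInverse i, ← h.leftInverse j]
    refine h.eq_of_adj hij fun he ↦ hne ?_
    obtain ⟨k, hik, hjk⟩ := mk_mem_cycleEdges_iff.1 he
    obtain rfl := h.leftInverse.injective hik
    exact hjk.imp (h.leftInverse.injective ·)
      fun hjk ↦ by rw [h.leftInverse.injective hjk, sub_add_cancel]
  · rintro (rfl | rfl)
    · exact h.adj_add_one i
    · exact (h.adj_add_one j).symm

theorem add_one_ne_sub_one (h : IsCycleRetraction G c r) (hl : 3 ≤ l) (i : Fin l) :
    c (i + 1) ≠ c (i - 1) :=
  h.leftInverse.injective.ne (fin_add_one_ne_sub_one hl i)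

variable [Fintype V]

theorem pair_subset_neighborFinset (h : IsCycleRetraction G c r) (i : Fin l) :
    {c (i + 1), c (i - 1)} ⊆ G.neighborFinset (c i) := by
  simp [insert_subset_iff, h.adj_add_one, h.adj_sub_one]

theorem two_le_degree (h : IsCycleRetraction G c r) (hl : 3 ≤ l) (i : Fin l) :
    2 ≤ G.degree (c i) := by
  rw [← card_pair (h.add_one_ne_sub_one hl i)]
  exact card_le_card (h.pair_subset_neighborFinset i)

theorem lapMatrix_mulVec_comp_apply_cycle (h : IsCycleRetraction G c r) (hl : 3 ≤ l)
    (f : Fin l → ℝ) (i : Fin l) :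
    (G.lapMatrix ℝ *ᵥ (f ∘ r)) (c i) = 2 * f i - f (i + 1) - f (i - 1) := by
  rw [lapMatrix_mulVec_eq_sum_sub, ← sum_subset (h.pair_subset_neighborFinset i),
    sum_pair (h.add_one_ne_sub_one hl i)]
  · simp only [Function.comp_apply, h.leftInverse _]
    ring
  · intro z hz hzc
    have he : s(c i, z) ∉ cycleEdges c := fun he ↦ by
      obtain ⟨j, hij, hj⟩ := mk_mem_cycleEdges_iff.1 he
      obtain rfl := h.leftInverse.injective hij
      exact hzc (by simpa using hj)
    simp [h.eq_of_adj ((G.mem_neighborFinset _ _).1 hz) he]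

theorem lapMatrix_mulVec_comp_of_notMem (h : IsCycleRetraction G c r) (f : Fin l → ℝ) {y : V}
    (hy : y ∉ Set.range c) : (G.lapMatrix ℝ *ᵥ (f ∘ r)) y = 0 := by
  rw [lapMatrix_mulVec_eq_sum_sub]
  refine sum_eq_zero fun z hz ↦ ?_
  have he : s(y, z) ∉ cycleEdges c := fun he ↦
    let ⟨i, hi, _⟩ := mk_mem_cycleEdges_iff.1 he
    hy ⟨i, hi.symm⟩
  simp [h.eq_of_adj ((G.mem_neighborFinset _ _).1 hz) he]

theorem cycleHitting_le_hitting (h : IsCycleRetraction G c r) (hG : G.Preconnected) (hl : 3 ≤ l)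
    {x : V} (hx : r x = 0) (y : V) : cycleHitting l (r y) ≤ hitting G y x := by
  refine le_hitting (f := cycleHitting l ∘ r) hG (by simp [hx]) (fun y _ ↦ ?_) y
  obtain hy0 | hy0 := eq_or_ne (r y) 0
  · rw [lapMatrix_mulVec_eq_sum_sub]
    refine (sum_nonpos fun z _ ↦ ?_).trans (Nat.cast_nonneg _)
    simpa [hy0] using cycleHitting_nonneg (r z)
  by_cases hy : y ∈ Set.range c
  · obtain ⟨i, rfl⟩ := hy
    rw [h.leftInverse] at hy0
    rw [h.lapMatrix_mulVec_comp_apply_cycle hl, two_mul_cycleHitting_sub hy0]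
    exact_mod_cast h.two_le_degree hl i
  · rw [h.lapMatrix_mulVec_comp_of_notMem _ hy]
    exact Nat.cast_nonneg _

end IsCycleRetraction

end CycleRetraction

section StarCycle

open scoped Matrix

variable {l : ℕ} [NeZero l] {G : SimpleGraph V} {c : Fin l → V}

/-- `G` is a copy of the graph `S_n^l` in which `c` enumerates the cycle, from the vertex `c 0`
that carries the pendant vertices. -/
structure IsStarCycle (G : SimpleGraph V) (c : Fin l → V) : Prop where
  injective : Function.Injective c
  adj_iff (i j : Fin l) : G.Adj (c i) (c j) ↔ j = i + 1 ∨ i = j + 1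
  adj_iff_of_notMem {v : V} (hv : v ∉ Set.range c) (z : V) : G.Adj v z ↔ z = c 0

theorem isStarCycle_starCycle {n : ℕ} (hl : 3 ≤ l) (hln : l ≤ n) :
    IsStarCycle (starCycle n l) (Fin.castLE hln) where
  injective := Fin.castLE_injective hln
  adj_iff i j := by
    simp only [starCycle, fromRel_adj, ne_eq, Fin.ext_iff, Fin.val_castLE, fin_val_add_one_eq_ite]
    split_ifs <;> omega
  adj_iff_of_notMem {v} hv z := by
    have hlv : l ≤ v := by simpa using hv
    simp only [starCycle, fromRel_adj, ne_eq, Fin.ext_iff, Fin.val_castLE, Fin.val_zero]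
    omega

namespace IsStarCycle

theorem rotate (h : IsStarCycle G c) (hc : Function.Surjective c) (i : Fin l) :
    IsStarCycle G (fun j ↦ c (j + i)) where
  injective := h.injective.comp (add_left_injective i)
  adj_iff j k := by
    rw [h.adj_iff, add_right_comm, add_right_comm k, add_left_inj, add_left_inj]
  adj_iff_of_notMem {v} hv z := by
    obtain ⟨j, rfl⟩ := hc v
    exact absurd ⟨j - i, congrArg c (sub_add_cancel j i)⟩ hv

theorem map {W : Type*} {G' : SimpleGraph W} (h : IsStarCycle G c) (e : G ≃g G') :
    IsStarCycle G' (e ∘ c) where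
  injective := e.injective.comp h.injective
  adj_iff i j := by simp only [Function.comp_apply, e.map_adj_iff, h.adj_iff]
  adj_iff_of_notMem {v} hv z := by
    obtain ⟨v, rfl⟩ := e.surjective v
    obtain ⟨z, rfl⟩ := e.surjective z
    rw [e.map_adj_iff, Function.comp_apply, e.injective.eq_iff]
    exact h.adj_iff_of_notMem (fun ⟨i, hi⟩ ↦ hv ⟨i, congrArg e hi⟩) z

theorem adj_apply_iff (h : IsStarCycle G c) (i : Fin l) (z : V) :
    G.Adj (c i) z ↔ z = c (i + 1) ∨ z = c (i - 1) ∨ i = 0 ∧ z ∉ Set.range c := by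
  by_cases hz : z ∈ Set.range c
  · obtain ⟨j, rfl⟩ := hz
    simp [h.adj_iff, h.injective.eq_iff, eq_sub_iff_add_eq, eq_comm]
  · have hne (j : Fin l) : z ≠ c j := fun hj ↦ hz ⟨j, hj.symm⟩
    rw [G.adj_comm, h.adj_iff_of_notMem hz, h.injective.eq_iff]
    simp [hne, hz]

theorem nonempty_iso {W : Type*} [Fintype V] [Fintype W] {G' : SimpleGraph W} {c' : Fin l → W}
    (h : IsStarCycle G c) (h' : IsStarCycle G' c') (hcard : Fintype.card V = Fintype.card W) :
    Nonempty (G ≃g G') := by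
  obtain ⟨e, he⟩ := exists_equiv_apply_eq h.injective h'.injective hcard
  have hmem (v : V) : e v ∈ Set.range c' ↔ v ∈ Set.range c := by
    simp [← he, e.injective.eq_iff]
  refine ⟨⟨e, fun {u v} ↦ ?_⟩⟩
  by_cases hu : u ∈ Set.range c
  · obtain ⟨i, rfl⟩ := hu
    rw [he, h'.adj_apply_iff, h.adj_apply_iff, hmem]
    simp only [← he, e.injective.eq_iff]
  · rw [h'.adj_iff_of_notMem (mt (hmem u).1 hu), h.adj_iff_of_notMem hu, ← he,
      e.injective.eq_iff]

variable [Fintype V]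

theorem neighborFinset_apply (h : IsStarCycle G c) {i : Fin l} (hi : i ≠ 0) :
    G.neighborFinset (c i) = {c (i + 1), c (i - 1)} := by
  ext z
  simp [h.adj_apply_iff, hi]

theorem neighborFinset_of_notMem (h : IsStarCycle G c) {v : V} (hv : v ∉ Set.range c) :
    G.neighborFinset v = {c 0} := by
  ext z
  simp [h.adj_iff_of_notMem hv]

theorem degree_apply (h : IsStarCycle G c) (hl : 3 ≤ l) {i : Fin l} (hi : i ≠ 0) :
    G.degree (c i) = 2 := by
  rw [← card_neighborFinset_eq_degree, h.neighborFinset_apply hi,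
    card_pair (h.injective.ne (fin_add_one_ne_sub_one hl i))]

theorem degree_of_notMem (h : IsStarCycle G c) {v : V} (hv : v ∉ Set.range c) :
    G.degree v = 1 := by
  rw [← card_neighborFinset_eq_degree, h.neighborFinset_of_notMem hv, card_singleton]

theorem degree_apply_zero (h : IsStarCycle G c) (hl : 3 ≤ l) :
    G.degree (c 0) = Fintype.card V - l + 2 := by
  have hnbr : G.neighborFinset (c 0) = {c (0 + 1), c (0 - 1)} ∪ (univ.image c)ᶜ := by
    ext z
    simp [h.adj_apply_iff]
  rw [← card_neighborFinset_eq_degree, hnbr, card_union_of_disjoint (by simp), card_compl,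
    card_image_of_injective _ h.injective, card_univ, Fintype.card_fin,
    card_pair (h.injective.ne (fin_add_one_ne_sub_one hl 0)), add_comm]

theorem hitting_eq (h : IsStarCycle G c) (hG : G.Preconnected) (hl : 3 ≤ l) :
    (hitting G · (c 0)) = Function.extend c (cycleHitting l) 1 := by
  have hext := h.injective.extend_apply (cycleHitting l) 1
  refine _root_.hitting_eq hG (by simp [hext]) fun y hy ↦ ?_
  rw [lapMatrix_mulVec_eq_sum_sub]
  by_cases hyc : y ∈ Set.range c
  · obtain ⟨i, rfl⟩ := hyc
    have hi : i ≠ 0 := fun hi ↦ hy (congrArg c hi)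
    rw [h.neighborFinset_apply hi, h.degree_apply hl hi,
      sum_pair (h.injective.ne (fin_add_one_ne_sub_one hl i)), hext, hext, hext, Nat.cast_ofNat,
      ← two_mul_cycleHitting_sub hi]
    ring
  · rw [h.neighborFinset_of_notMem hyc, h.degree_of_notMem hyc, sum_singleton,
      Function.extend_apply' _ _ _ hyc, hext]
    simp

theorem reverseCoverCost_eq (h : IsStarCycle G c) (hG : G.Preconnected) (hl : 3 ≤ l) :
    reverseCoverCost G (c 0) = l ^ 3 / 6 - 7 * l / 6 + Fintype.card V := by
  rw [reverseCoverCost, ← sum_extend_cycleHitting h.injective, ← h.hitting_eq hG hl]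

theorem exists_apply_zero_eq (h : IsStarCycle G c) (hl : 3 ≤ l) {x : V}
    (hx : G.degree x = Fintype.card V - l + 2) : ∃ c' : Fin l → V, IsStarCycle G c' ∧ c' 0 = x := by
  by_cases hxc : x ∈ Set.range c
  · obtain ⟨i, rfl⟩ := hxc
    obtain rfl | hi := eq_or_ne i 0
    · exact ⟨c, h, rfl⟩
    have hle : Fintype.card V ≤ Fintype.card (Fin l) := by
      rw [h.degree_apply hl hi] at hx
      rw [Fintype.card_fin]
      omega
    have hc := ((Fintype.bijective_iff_injective_and_card c).2
      ⟨h.injective, (Fintype.card_le_of_injective c h.injective).antisymm hle⟩).surjective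
    exact ⟨_, h.rotate hc i, congrArg c (zero_add i)⟩
  · rw [h.degree_of_notMem hxc] at hx
    omega

end IsStarCycle

theorem exists_isStarCycle_iff [Fintype V] (hl : 3 ≤ l) (hln : l ≤ Fintype.card V) {x : V} :
    (∃ c : Fin l → V, IsStarCycle G c ∧ c 0 = x) ↔
      Nonempty (starCycle (Fintype.card V) l ≃g G) ∧ G.degree x = Fintype.card V - l + 2 := by
  have hstar := isStarCycle_starCycle hl hln
  constructor
  · rintro ⟨c, h, rfl⟩
    exact ⟨hstar.nonempty_iso h (Fintype.card_fin _), h.degree_apply_zero hl⟩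
  · rintro ⟨⟨e⟩, hx⟩
    exact (hstar.map e).exists_apply_zero_eq hl hx

end StarCycle

section LowerBound

variable [Fintype V] {l : ℕ} [NeZero l] {G : SimpleGraph V} {c s : Fin l → V} {r : V → Fin l}

namespace IsCycleRetraction

theorem extend_cycleHitting_le_hitting (h : IsCycleRetraction G c r) (hG : G.Preconnected)
    (hl : 3 ≤ l) (hs : Function.LeftInverse r s) (y : V) :
    Function.extend s (cycleHitting l) 1 y ≤ hitting G y (s 0) := by
  by_cases hy : y ∈ Set.range s
  · obtain ⟨i, rfl⟩ := hy
    simpa only [hs.injective.extend_apply, hs i] using h.cycleHitting_le_hitting hG hl (hs 0) (s i)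
  · rw [Function.extend_apply' _ _ _ hy]
    exact one_le_hitting hG fun hy0 ↦ hy ⟨0, hy0.symm⟩

theorem le_reverseCoverCost (h : IsCycleRetraction G c r) (hG : G.Preconnected) (hl : 3 ≤ l)
    (hs : Function.LeftInverse r s) :
    l ^ 3 / 6 - 7 * l / 6 + Fintype.card V ≤ reverseCoverCost G (s 0) := by
  rw [← sum_extend_cycleHitting hs.injective]
  exact sum_le_sum fun y _ ↦ h.extend_cycleHitting_le_hitting hG hl hs y

theorem eq_of_adj_of_reverseCoverCost_eq (h : IsCycleRetraction G c r) (hG : G.Preconnected)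
    (hl : 3 ≤ l) (hs : Function.LeftInverse r s)
    (heq : reverseCoverCost G (s 0) = l ^ 3 / 6 - 7 * l / 6 + Fintype.card V) {v z : V}
    (hv : v ∉ Set.range s) (hz : G.Adj v z) : z = s 0 := by
  rw [← sum_extend_cycleHitting hs.injective] at heq
  have hhit := (sum_eq_sum_iff_of_le fun y _ ↦ h.extend_cycleHitting_le_hitting hG hl hs y).1
    heq.symm v (mem_univ v)
  rw [Function.extend_apply' _ _ _ hv] at hhit
  exact eq_of_adj_of_hitting_eq_one hG (fun hv0 ↦ hv ⟨0, hv0.symm⟩) hhit.symm hz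

theorem isStarCycle_of_reverseCoverCost_eq (h : IsCycleRetraction G c r) (hG : G.Preconnected)
    (hl : 3 ≤ l) (hs : Function.LeftInverse r s)
    (heq : reverseCoverCost G (s 0) = l ^ 3 / 6 - 7 * l / 6 + Fintype.card V) :
    IsStarCycle G s := by
  have hpend {v z : V} := h.eq_of_adj_of_reverseCoverCost_eq (v := v) (z := z) hG hl hs heq
  -- A vertex of the cycle has two neighbours, so it cannot be pendant at `s 0`.
  have hcs : c = s := funext fun i ↦ by
    obtain ⟨j, hj⟩ : c i ∈ Set.range s := by_contra fun hi ↦ h.add_one_ne_sub_one hl i <|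
      (hpend hi (h.adj_add_one i)).trans (hpend hi (h.adj_sub_one i)).symm
    rw [← hj, ← h.leftInverse i, ← hj, hs j]
  subst hcs
  refine ⟨h.leftInverse.injective, h.adj_iff, fun {v} hv z ↦ ⟨hpend hv, ?_⟩⟩
  rintro rfl
  have hdeg := Nat.cast_pos.1 (degree_cast_pos_of_ne hG fun hv0 : v = c 0 ↦ hv ⟨0, hv0.symm⟩)
  obtain ⟨z, hz⟩ := (G.degree_pos_iff_exists_adj v).1 hdeg
  exact hpend hv hz ▸ hz

end IsCycleRetraction

end LowerBound

section Unicyclic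

variable {l : ℕ} [NeZero l] {G : SimpleGraph V} {c : Fin l → V}

theorem ncard_cycleEdges (hl : 3 ≤ l) (hc : Function.Injective c) : (cycleEdges c).ncard = l := by
  have hinj : Function.Injective fun i : Fin l ↦ s(c i, c (i + 1)) := by
    intro i j hij
    obtain ⟨hij, -⟩ | ⟨hij, hji⟩ := Sym2.eq_iff.1 hij
    · exact hc hij
    · refine absurd ?_ (fin_add_one_ne_sub_one hl i)
      rw [hc hji, hc hij, add_sub_cancel_right]
  rw [cycleEdges, Set.ncard_range_of_injective hinj, Nat.card_fin]

theorem card_le_card_edgeSet_add_ncard [Finite V] {s : Set V} (hs : s.Nonempty)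
    (hG : ∀ v, ∃ u ∈ s, G.Reachable v u) : Nat.card V ≤ Nat.card G.edgeSet + s.ncard := by
  obtain ⟨w, hw⟩ := hs
  -- Joining one vertex of `s` to all the others makes the graph connected.
  let F : Set (Sym2 V) := (s(w, ·)) '' (s \ {w})
  have hF (u : V) (hu : u ∈ s) : (G ⊔ fromEdgeSet F).Reachable u w := by
    obtain rfl | huw := eq_or_ne u w
    · exact .refl _
    · refine (Adj.reachable ?_).symm
      exact sup_adj _ _ _ _ |>.2 (.inr ((fromEdgeSet_adj F).2 ⟨⟨u, ⟨hu, huw⟩, rfl⟩, huw.symm⟩))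
  have hconn : (G ⊔ fromEdgeSet F).Connected := connected_iff_exists_forall_reachable _ |>.2
    ⟨w, fun v ↦ let ⟨u, hu, hvu⟩ := hG v; ((hvu.mono le_sup_left).trans (hF u hu)).symm⟩
  have hedges : (G ⊔ fromEdgeSet F).edgeSet ⊆ G.edgeSet ∪ F := by
    rw [edgeSet_sup, edgeSet_fromEdgeSet]
    exact Set.union_subset_union_right _ Set.sdiff_subset
  calc Nat.card V ≤ (G ⊔ fromEdgeSet F).edgeSet.ncard + 1 :=
        hconn.card_vert_le_card_edgeSet_add_one
    _ ≤ G.edgeSet.ncard + F.ncard + 1 := by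
        gcongr
        exact (Set.ncard_le_ncard hedges (Set.toFinite _)).trans (Set.ncard_union_le _ _)
    _ ≤ G.edgeSet.ncard + (s \ {w}).ncard + 1 := by
        gcongr
        exact Set.ncard_image_le (Set.toFinite _)
    _ = Nat.card G.edgeSet + s.ncard := by
        rw [add_assoc, Set.ncard_sdiff_singleton_add_one hw (Set.toFinite _)]
        rfl

theorem exists_reachable_deleteEdges_cycleEdges (hG : G.Preconnected) (v : V) :
    ∃ i, (G.deleteEdges (cycleEdges c)).Reachable v (c i) := by
  have hv := (reachable_iff_reflTransGen v (c 0)).1 (hG v (c 0))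
  induction hv using Relation.ReflTransGen.head_induction_on with
  | refl => exact ⟨0, .refl _⟩
  | @head u v huv _ ih =>
    by_cases he : s(u, v) ∈ cycleEdges c
    · obtain ⟨i, rfl, -⟩ := mk_mem_cycleEdges_iff.1 he
      exact ⟨i, .refl _⟩
    · obtain ⟨i, hi⟩ := ih
      exact ⟨i, (Adj.reachable (deleteEdges_adj.2 ⟨huv, he⟩)).trans hi⟩

theorem card_edgeSet_deleteEdges_cycleEdges [Finite V] (hl : 3 ≤ l) (hc : Function.Injective c)
    (hadj : ∀ i, G.Adj (c i) (c (i + 1))) :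
    Nat.card (G.deleteEdges (cycleEdges c)).edgeSet + l = esize G := by
  have hsub : cycleEdges c ⊆ G.edgeSet := by
    rintro _ ⟨i, rfl⟩
    exact hadj i
  have hcard := Set.ncard_sdiff_add_ncard_of_subset hsub (Set.toFinite _)
  rwa [ncard_cycleEdges hl hc, ← edgeSet_deleteEdges] at hcard

theorem eq_of_reachable_deleteEdges_cycleEdges [Fintype V] (hG : G.Preconnected)
    (huni : esize G ≤ Fintype.card V) (hl : 3 ≤ l) (hc : Function.Injective c)
    (hadj : ∀ i, G.Adj (c i) (c (i + 1))) {i j : Fin l}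
    (hij : (G.deleteEdges (cycleEdges c)).Reachable (c i) (c j)) : i = j := by
  by_contra hne
  have hcard := card_le_card_edgeSet_add_ncard (G := G.deleteEdges (cycleEdges c))
    (s := c '' {i}ᶜ) ⟨c j, j, Ne.symm hne, rfl⟩ fun v ↦ by
      obtain ⟨k, hk⟩ := exists_reachable_deleteEdges_cycleEdges (c := c) hG v
      obtain rfl | hki := eq_or_ne k i
      · exact ⟨c j, ⟨j, Ne.symm hne, rfl⟩, hk.trans hij⟩
      · exact ⟨c k, ⟨k, hki, rfl⟩, hk⟩
  have hedges := card_edgeSet_deleteEdges_cycleEdges hl hc hadj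
  rw [Set.ncard_image_of_injective _ hc, Set.ncard_compl, Set.ncard_singleton, Nat.card_fin,
    Nat.card_eq_fintype_card] at hcard
  omega

theorem exists_isCycleRetraction [Fintype V] (hG : G.Preconnected)
    (huni : esize G ≤ Fintype.card V) (hl : 3 ≤ l) (hc : Function.Injective c)
    (hadj : ∀ i, G.Adj (c i) (c (i + 1))) : ∃ r, IsCycleRetraction G c r := by
  choose r hr using exists_reachable_deleteEdges_cycleEdges (c := c) hG
  have heq {i j : Fin l} := eq_of_reachable_deleteEdges_cycleEdges (i := i) (j := j) hG huni hl hc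
    hadj
  exact ⟨r, hadj, fun i ↦ (heq (hr (c i))).symm, fun {u v} huv he ↦
    heq ((hr u).symm.trans ((Adj.reachable (deleteEdges_adj.2 ⟨huv, he⟩)).trans (hr v)))⟩

end Unicyclic

theorem reverseCoverCost_lower_general [Fintype V] {G : SimpleGraph V} {l : ℕ} [NeZero l]
    {c : Fin l → V} {r : V → Fin l} (h : IsCycleRetraction G c r) (hG : G.Preconnected)
    (hl : 3 ≤ l) (x : V) :
    l ^ 3 / 6 - 7 * l / 6 + Fintype.card V ≤ reverseCoverCost G x ∧
      (reverseCoverCost G x = l ^ 3 / 6 - 7 * l / 6 + Fintype.card V ↔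
        Nonempty (starCycle (Fintype.card V) l ≃g G) ∧
          G.degree x = Fintype.card V - l + 2) := by
  have hln : l ≤ Fintype.card V := by
    simpa using Fintype.card_le_of_injective c h.leftInverse.injective
  have hrot := h.rotate (r x)
  obtain ⟨s, hs, rfl⟩ : ∃ s, Function.LeftInverse (fun v ↦ r v - r x) s ∧ s 0 = x := by
    refine ⟨_, leftInverse_update hrot.leftInverse x, ?_⟩
    rw [sub_self, Function.update_self]
  rw [← exists_isStarCycle_iff hl hln]
  refine ⟨hrot.le_reverseCoverCost hG hl hs, fun heq ↦
    ⟨s, hrot.isStarCycle_of_reverseCoverCost_eq hG hl hs heq, rfl⟩, ?_⟩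
  rintro ⟨c', hstar, hc'⟩
  rw [← hc', hstar.reverseCoverCost_eq hG hl]

/-- For an `n`-vertex unicyclic graph `G` with cycle length `l`
and any `x ∈ V(G)`, `RC(x) ≥ l³/6 − 7l/6 + n`, with equality iff `G ≅ S_n^l`
and `x` is the vertex of degree `n − l + 2`. -/
theorem reverseCoverCost_lower [Fintype V] (G : SimpleGraph V) (n l : ℕ) [NeZero l]
    (hn : Fintype.card V = n) (hconn : G.Connected) (huni : esize G = n)
    (hl : 3 ≤ l) (c : Fin l → V) (hinj : Function.Injective c)
    (hadj : ∀ i : Fin l, G.Adj (c i) (c (i + 1))) (x : V) :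
    (l : ℝ)^3/6 - 7*(l : ℝ)/6 + (n : ℝ) ≤ reverseCoverCost G x ∧
    (reverseCoverCost G x = (l : ℝ)^3/6 - 7*(l : ℝ)/6 + (n : ℝ) ↔
      Nonempty (starCycle n l ≃g G) ∧ G.degree x = n - l + 2) := by
  subst hn
  obtain ⟨r, h⟩ := exists_isCycleRetraction hconn.preconnected huni.le hl hinj hadj
  exact reverseCoverCost_lower_general h hconn.preconnected hl x
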